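/- arXiv:1807.05348 — 2 statements merged into one kernel-verified Lean document; each statement's English description precedes it below -/
import Mathlib

section
/- Let A be an n×m matrix with nonnegative integer entries such that every column A_k of A has at least one nonzero entry, let y ∈ (ℤ_{≥0})ⁿ, let N := ‖y‖_∞ + 1, let r ∈ ℝ with r > 1, and for y ∈ ℤⁿ let f_A(y) be the number of x ∈ ℤ^m with x ≥ 0 and Ax = y. For k ≥ 1 let E_k := #{x ∈ (ℤ_{≥0})^m : there exists u ∈ (ℤ_{≥0})ⁿ with Ax = y + Nu and 𝟙ᵀu = k} (each E_k is finite). Then the series ∑_{k=1}^∞ r^{-Nk}·E_k converges, and (1/Nⁿ) ∑_{j ∈ {0,1,…,N−1}ⁿ} [∏_{k=1}^m (1 − (r·ω_N(j))^{-A_k})^{-1}] · r^{𝟙ᵀy} · ω_N(jᵀy) = f_A(y) + ∑_{k=1}^∞ r^{-Nk}·E_k, as complex numbers. -/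
/-!
Expanding each factor `(1 - z^{-A_k})⁻¹` as a geometric series (convergent since `|z_l| = r > 1` and
each column of `A` is nonzero) turns the product into the absolutely convergent series
`∑_x z^{-Ax}` over `x ∈ ℕ^m` (`hasSum_prod_geometric`). Averaging over the grid `z = r · ω_N(j)`
kills, by orthogonality of the characters of `(ℤ/N)ⁿ` (`sum_grid`), every `x` with
`Ax ≢ y (mod N)`. Since `0 ≤ y_l < N` and `Ax ≥ 0`, the surviving `x` are exactly those with
`Ax = y + N u` for some `u ≥ 0`, and such an `x` contributes `r^{-N 𝟙ᵀu}`. Grouping the surviving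
terms by `k = 𝟙ᵀu` gives `∑_{k ≥ 0} r^{-Nk} E_k`, whose `k = 0` term is `f_A(y)`.
-/

open Real

/-- Product of `m` geometric series, expanded over multi-indices; the absolute summability is what
makes the induction on `m` go through. -/
lemma hasSum_prod_geometric (m : ℕ) (t : Fin m → ℂ) (ht : ∀ k, ‖t k‖ < 1) :
    (Summable fun x : Fin m → ℕ => ‖∏ k, t k ^ x k‖) ∧
      HasSum (fun x : Fin m → ℕ => ∏ k, t k ^ x k) (∏ k, (1 - t k)⁻¹) := by
  induction m with
  | zero =>
    refine ⟨(hasSum_fintype _).summable, ?_⟩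
    simp
  | succ m ih =>
    obtain ⟨hs, hS⟩ := ih (fun k => t k.succ) (fun k => ht _)
    have h0 : HasSum (fun i : ℕ => t 0 ^ i) (1 - t 0)⁻¹ := hasSum_geometric_of_norm_lt_one (ht 0)
    have h0s : Summable fun i : ℕ => ‖t 0 ^ i‖ := by
      simpa using summable_geometric_of_lt_one (norm_nonneg _) (ht 0)
    have hnorm : Summable fun p : ℕ × (Fin m → ℕ) =>
        ‖t 0 ^ p.1 * ∏ k : Fin m, t k.succ ^ p.2 k‖ :=
      Summable.mul_norm (f := fun i : ℕ => t 0 ^ i)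
        (g := fun x : Fin m → ℕ => ∏ k : Fin m, t k.succ ^ x k) h0s hs
    have hmul : HasSum (fun p : ℕ × (Fin m → ℕ) => t 0 ^ p.1 * ∏ k : Fin m, t k.succ ^ p.2 k)
        ((1 - t 0)⁻¹ * ∏ k : Fin m, (1 - t k.succ)⁻¹) :=
      HasSum.mul (f := fun i : ℕ => t 0 ^ i)
        (g := fun x : Fin m → ℕ => ∏ k : Fin m, t k.succ ^ x k) h0 hS hnorm.of_norm
    have hcons : ∀ p : ℕ × (Fin m → ℕ),
        ∏ k, t k ^ (Fin.consEquiv (fun _ : Fin (m + 1) => ℕ)) p k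
          = t 0 ^ p.1 * ∏ k : Fin m, t k.succ ^ p.2 k := fun p => by
      rw [Fin.prod_univ_succ]
      rfl
    constructor
    · rw [← (Fin.consEquiv (fun _ : Fin (m + 1) => ℕ)).summable_iff]
      exact hnorm.congr fun p => by rw [Function.comp_apply, hcons]
    · rw [← (Fin.consEquiv (fun _ : Fin (m + 1) => ℕ)).hasSum_iff, Fin.prod_univ_succ]
      have : (fun x : Fin (m + 1) → ℕ => ∏ k, t k ^ x k)
          ∘ (Fin.consEquiv (fun _ : Fin (m + 1) => ℕ))
          = fun p : ℕ × (Fin m → ℕ) => t 0 ^ p.1 * ∏ k : Fin m, t k.succ ^ p.2 k :=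
        funext hcons
      rw [this]
      exact hmul

lemma prod_zpow_eq_zpow_sum {ι : Type*} (s : Finset ι) {z : ℂ} (hz : z ≠ 0) (a : ι → ℤ) :
    ∏ i ∈ s, z ^ a i = z ^ ∑ i ∈ s, a i := by
  classical
  induction s using Finset.induction_on with
  | empty => simp
  | insert i s hi ih => rw [Finset.prod_insert hi, Finset.sum_insert hi, zpow_add₀ hz, ih]

lemma sum_zpow_pow_of_isPrimitiveRoot {N : ℕ} {ζ : ℂ} (hζ : IsPrimitiveRoot ζ N) (d : ℤ) :
    ∑ i : Fin N, (ζ ^ d) ^ (i : ℕ) = if (N : ℤ) ∣ d then (N : ℂ) else 0 := by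
  split_ifs with h
  · simp [(hζ.zpow_eq_one_iff_dvd d).2 h]
  · have h1 : ζ ^ d ≠ 1 := fun h' => h ((hζ.zpow_eq_one_iff_dvd d).1 h')
    rw [Fin.sum_univ_eq_sum_range (fun i => (ζ ^ d) ^ i) N, geom_sum_eq h1]
    have : (ζ ^ d) ^ N = 1 := by
      rw [← zpow_natCast, zpow_comm, zpow_natCast, hζ.pow_eq_one, one_zpow]
    simp [this]

/-- Orthogonality of characters on the grid `{0, …, N-1}ⁿ`. -/
lemma sum_grid {n N : ℕ} {ζ : ℂ} (hζ : IsPrimitiveRoot ζ N) (d : Fin n → ℤ) :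
    ∑ j : Fin n → Fin N, ∏ l, (ζ ^ d l) ^ (j l : ℕ)
      = if ∀ l, (N : ℤ) ∣ d l then (N : ℂ) ^ n else 0 := by
  rw [← Fintype.prod_sum (fun l (i : Fin N) => (ζ ^ d l) ^ (i : ℕ))]
  simp_rw [sum_zpow_pow_of_isPrimitiveRoot hζ]
  rw [Finset.prod_ite_zero]
  simp

/-- One term of the geometric expansion at the grid point `r ζ^j`, with the weight
`r^{𝟙ᵀy} ζ^{jᵀy}`, depends on `x` only through `y - Ax`. -/
lemma grid_term {n m : ℕ} (A : Matrix (Fin n) (Fin m) ℕ) (y : Fin n → ℕ) {r ζ : ℂ}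
    (hr : r ≠ 0) (hζ : ζ ≠ 0) (j : Fin n → ℕ) (x : Fin m → ℕ) :
    (∏ k, (∏ l, (r * ζ ^ j l) ^ (-(A l k : ℤ))) ^ x k) * r ^ (∑ l, y l) * ζ ^ (∑ l, j l * y l)
      = r ^ (∑ l, ((y l : ℤ) - (A.mulVec x l : ℕ)))
        * ∏ l, (ζ ^ ((y l : ℤ) - (A.mulVec x l : ℕ))) ^ j l := by
  have h1 : (∏ k, (∏ l, (r * ζ ^ j l) ^ (-(A l k : ℤ))) ^ x k)
      = ∏ l, (r * ζ ^ j l) ^ (-(A.mulVec x l : ℤ)) := by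
    simp_rw [← Finset.prod_pow]
    rw [Finset.prod_comm]
    refine Finset.prod_congr rfl fun l _ => ?_
    simp_rw [← zpow_natCast, ← zpow_mul]
    have hz : r * ζ ^ (j l : ℤ) ≠ 0 := mul_ne_zero hr (zpow_ne_zero _ hζ)
    rw [prod_zpow_eq_zpow_sum _ hz]
    simp [Matrix.mulVec, dotProduct]
  have h2 : r ^ (∑ l, ((y l : ℤ) - (A.mulVec x l : ℕ)))
      = ∏ l, r ^ ((y l : ℤ) - (A.mulVec x l : ℕ)) := (prod_zpow_eq_zpow_sum _ hr _).symm
  rw [h1, h2, ← Finset.prod_pow_eq_pow_sum, ← Finset.prod_pow_eq_pow_sum,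
    ← Finset.prod_mul_distrib, ← Finset.prod_mul_distrib, ← Finset.prod_mul_distrib]
  refine Finset.prod_congr rfl fun l _ => ?_
  rw [mul_zpow, ← zpow_natCast, ← zpow_natCast, ← zpow_natCast, ← zpow_natCast, ← zpow_mul,
    ← zpow_mul, sub_eq_add_neg, zpow_add₀ hr, add_mul, zpow_add₀ hζ]
  push_cast
  ring_nf

/-- The points `x` counted by `E_k`. -/
def levelSet {n m : ℕ} (A : Matrix (Fin n) (Fin m) ℕ) (y : Fin n → ℕ) (N k : ℕ) :
    Set (Fin m → ℕ) :=
  {x | ∃ u : Fin n → ℕ, (A.mulVec x = fun l => y l + N * u l) ∧ ∑ l, u l = k}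

/-- For `0 ≤ y < N` and `Ax ≥ 0`, congruence of `Ax` and `y` modulo `N` forces `Ax = y + N u` with
`u ≥ 0`. -/
lemma dvd_iff_exists {n N : ℕ} {y a : Fin n → ℕ} (hy : ∀ l, y l < N) :
    (∀ l, (N : ℤ) ∣ (y l : ℤ) - (a l : ℕ)) ↔ ∃ u : Fin n → ℕ, a = fun l => y l + N * u l := by
  constructor
  · intro h
    refine ⟨fun l => a l / N, funext fun l => ?_⟩
    have h1 : a l ≡ y l [MOD N] := (Nat.modEq_iff_dvd).2 (h l)
    have h2 : a l % N = y l := by rw [h1, Nat.mod_eq_of_lt (hy l)]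
    rw [← h2]
    exact (Nat.mod_add_div (a l) N).symm
  · rintro ⟨u, rfl⟩ l
    exact ⟨-(u l), by push_cast; ring⟩

open Classical in
/-- Summing the surviving terms level by level. -/
lemma hasSum_levels {n m : ℕ} (A : Matrix (Fin n) (Fin m) ℕ) {y : Fin n → ℕ} {N : ℕ}
    (hy : ∀ l, y l < N) (hN : 0 < N) {r S : ℂ}
    (hS : HasSum (fun x : Fin m → ℕ =>
      if ∀ l, (N : ℤ) ∣ (y l : ℤ) - (A.mulVec x l : ℕ) then
        r ^ (∑ l, ((y l : ℤ) - (A.mulVec x l : ℕ))) else 0) S) :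
    HasSum (fun k : ℕ => r ^ (-((N : ℤ) * (k : ℤ))) * (Nat.card (levelSet A y N k) : ℂ)) S := by
  -- On a surviving `x` with `Ax = y + N u`, this level function takes the value `𝟙ᵀu`; its value
  -- elsewhere is irrelevant.
  let g : (Fin m → ℕ) → ℕ := fun x => ∑ l, (A.mulVec x l - y l) / N
  have hg : ∀ x (u : Fin n → ℕ), (A.mulVec x = fun l => y l + N * u l) → g x = ∑ l, u l := by
    intro x u hu
    simp [g, hu, hN]
  convert! hS.tsum_fiberwise g using 1
  ext k
  have : (g ⁻¹' {k}).indicator (fun x : Fin m → ℕ =>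
      if ∀ l, (N : ℤ) ∣ (y l : ℤ) - (A.mulVec x l : ℕ) then
        r ^ (∑ l, ((y l : ℤ) - (A.mulVec x l : ℕ))) else 0)
      = (levelSet A y N k).indicator (fun _ => r ^ (-((N : ℤ) * (k : ℤ)))) := by
    ext x
    by_cases hx : x ∈ levelSet A y N k
    · obtain ⟨u, hu, hk⟩ := id hx
      have hgx : x ∈ g ⁻¹' {k} := by
        simp only [Set.mem_preimage, Set.mem_singleton_iff]
        rw [hg x u hu, hk]
      rw [Set.indicator_of_mem hx, Set.indicator_of_mem hgx,
        if_pos ((dvd_iff_exists hy).2 ⟨u, hu⟩)]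
      congr 1
      rw [← hk, hu]
      push_cast
      rw [Finset.mul_sum, ← Finset.sum_neg_distrib]
      exact Finset.sum_congr rfl fun l _ => by ring
    · rw [Set.indicator_of_notMem hx]
      by_cases hgx : x ∈ g ⁻¹' {k}
      · rw [Set.indicator_of_mem hgx, if_neg]
        intro hd
        obtain ⟨u, hu⟩ := (dvd_iff_exists hy).1 hd
        exact hx ⟨u, hu, (hg x u hu).symm.trans hgx⟩
      · rw [Set.indicator_of_notMem hgx]
  refine Eq.trans ?_ (tsum_subtype (g ⁻¹' {k}) (fun x : Fin m → ℕ =>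
      if ∀ l, (N : ℤ) ∣ (y l : ℤ) - (A.mulVec x l : ℕ) then
        r ^ (∑ l, ((y l : ℤ) - (A.mulVec x l : ℕ))) else 0)).symm
  rw [this, ← tsum_subtype, tsum_const, nsmul_eq_mul, mul_comm]

/-- Error estimate for the trapezoidal-rule approximation of the inverse Z-transform:
`I_{N,r}[f̂_A](y) = f_A(y) + ∑_{k≥1} r^{-Nk} E_k`. -/
theorem stmt_6 (n m : ℕ) (hn : 1 ≤ n) (hm : 1 ≤ m)
    (A : Matrix (Fin n) (Fin m) ℕ) (hA : ∀ k : Fin m, ∃ l : Fin n, A l k ≠ 0)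
    (y : Fin n → ℕ) (N : ℕ) (hN : N = (Finset.univ.sup y) + 1)
    (r : ℝ) (hr : 1 < r)
    (fA : (Fin n → ℕ) → ℕ)
    (hfA : ∀ y' : Fin n → ℕ, fA y' = Nat.card {x : Fin m → ℕ // A.mulVec x = y'})
    (E : ℕ → ℕ)
    (hE : ∀ k : ℕ, E k = Nat.card {x : Fin m → ℕ //
        ∃ u : Fin n → ℕ, (A.mulVec x = fun l => y l + N * u l) ∧ ∑ l, u l = k}) :
    Summable (fun k : ℕ => (r : ℝ) ^ (-((N : ℤ) * ((k : ℤ) + 1))) * (E (k + 1) : ℝ)) ∧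
    (1 / (N : ℂ) ^ n) *
      ∑ j : Fin n → Fin N,
        (∏ k, (1 - ∏ l, ((r : ℂ) * Complex.exp (2 * π * Complex.I * (j l : ℕ) / N))
              ^ (-(A l k : ℤ)))⁻¹)
          * (r : ℂ) ^ (∑ l, y l)
          * Complex.exp (2 * π * Complex.I * (∑ l, (j l : ℕ) * y l) / N)
      = (fA y : ℂ) +
          ∑' k : ℕ, (r : ℂ) ^ (-((N : ℤ) * ((k : ℤ) + 1))) * (E (k + 1) : ℂ) := by
  classical
  have hN0 : 0 < N := by omega
  have hy : ∀ l, y l < N := fun l => by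
    have := Finset.le_sup (f := y) (Finset.mem_univ l)
    omega
  have hr0 : (r : ℂ) ≠ 0 := by exact_mod_cast (by linarith : r ≠ 0)
  obtain ⟨ζ, hζdef⟩ : ∃ ζ : ℂ, ζ = Complex.exp (2 * π * Complex.I / N) := ⟨_, rfl⟩
  have hζ : IsPrimitiveRoot ζ N := hζdef ▸ Complex.isPrimitiveRoot_exp N hN0.ne'
  have hζ0 : ζ ≠ 0 := hζ.ne_zero hN0.ne'
  have hexp : ∀ a : ℕ, Complex.exp (2 * π * Complex.I * (a : ℂ) / N) = ζ ^ a := fun a => by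
    rw [hζdef, ← Complex.exp_nat_mul]
    congr 1
    ring
  simp_rw [hexp]
  have hnorm : ‖ζ‖ = 1 := hζ.norm'_eq_one hN0.ne'
  have hlt : ∀ (j : Fin n → Fin N) (k : Fin m),
      ‖∏ l, ((r : ℂ) * ζ ^ (j l : ℕ)) ^ (-(A l k : ℤ))‖ < 1 := by
    intro j k
    obtain ⟨l₀, hl₀⟩ := hA k
    have h1 : ‖∏ l, ((r : ℂ) * ζ ^ (j l : ℕ)) ^ (-(A l k : ℤ))‖ = (r ^ ∑ l, A l k)⁻¹ := by
      rw [norm_prod, ← Finset.prod_pow_eq_pow_sum, ← Finset.prod_inv_distrib]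
      refine Finset.prod_congr rfl fun l _ => ?_
      simp [hnorm, abs_of_pos (by linarith : 0 < r)]
    rw [h1]
    apply inv_lt_one_of_one_lt₀
    apply one_lt_pow₀ hr
    have : A l₀ k ≤ ∑ l, A l k :=
      Finset.single_le_sum (f := fun l => A l k) (fun _ _ => Nat.zero_le _) (Finset.mem_univ l₀)
    omega
  have hsum := (hasSum_sum (s := (Finset.univ : Finset (Fin n → Fin N))) fun j _ =>
    (((hasSum_prod_geometric m _ (hlt j)).2.mul_right ((r : ℂ) ^ (∑ l, y l))).mul_right
      (ζ ^ (∑ l, (j l : ℕ) * y l)))).mul_left (1 / (N : ℂ) ^ n)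
  have hNn : (N : ℂ) ^ n ≠ 0 := pow_ne_zero _ (by exact_mod_cast hN0.ne')
  have hterm : ∀ x : Fin m → ℕ, (1 / (N : ℂ) ^ n) * ∑ j : Fin n → Fin N,
      (∏ k, (∏ l, ((r : ℂ) * ζ ^ (j l : ℕ)) ^ (-(A l k : ℤ))) ^ x k) * (r : ℂ) ^ (∑ l, y l)
        * ζ ^ (∑ l, (j l : ℕ) * y l)
      = if ∀ l, (N : ℤ) ∣ (y l : ℤ) - (A.mulVec x l : ℕ) then
        (r : ℂ) ^ (∑ l, ((y l : ℤ) - (A.mulVec x l : ℕ))) else 0 := by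
    intro x
    simp_rw [grid_term A y hr0 hζ0 (fun l => ((_ : Fin n → Fin N) l : ℕ)) x]
    rw [← Finset.mul_sum, sum_grid hζ]
    split_ifs
    · field_simp
    · simp
  simp_rw [hterm] at hsum
  have hlev := hasSum_levels A hy hN0 hsum
  have hE' : ∀ k, Nat.card (levelSet A y N k) = E k := fun k => (hE k).symm
  simp_rw [hE'] at hlev
  -- At level `0` the vector `u` vanishes.
  have hE0 : E 0 = fA y := by
    rw [hE, hfA]
    refine Nat.card_congr (Equiv.subtypeEquivRight fun x => ⟨?_, fun h => ⟨0, by simpa using h⟩⟩)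
    rintro ⟨u, hu, h0⟩
    have : ∀ l, u l = 0 := by simpa using h0
    simpa [this] using hu
  have hshift := (hasSum_nat_add_iff' 1).2 hlev
  simp only [Finset.range_one, Finset.sum_singleton, Nat.cast_add, Nat.cast_one, Nat.cast_zero,
    mul_zero, neg_zero, zpow_zero, one_mul, hE0] at hshift
  refine ⟨?_, ?_⟩
  · rw [← Complex.summable_ofReal]
    refine hshift.summable.congr fun k => ?_
    push_cast
    rfl
  · rw [hshift.tsum_eq]
    ring
end

section
/- Let A be an n×m matrix with nonnegative integer entries such that every column A_l of A has at least one nonzero entry, let y ∈ (ℤ_{≥0})ⁿ, let N := ‖y‖_∞ + 1, and for y ∈ ℤⁿ let f_A(y) be the number of x ∈ ℤ^m with x ≥ 0 and Ax = y. Consider the polynomial P ∈ ℂ[X] defined by P := (1/Nⁿ) ∑_{j ∈ {0,1,…,N−1}ⁿ} ω_N(jᵀy) · ∏_{l=1}^m ( ∑_{h=0}^{N−1} ω_N(−jᵀA_l · h) · X^{(𝟙ᵀA_l)·h} ). Then f_A(y) equals the coefficient of X^{𝟙ᵀy} in P (the coefficient, a priori a complex number, equals the natural number f_A(y)). -/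
/-!
Expanding the product over the columns gives `P = ∑_x c(x) X^{𝟙ᵀAx}`, where `x` runs over
`{0,…,N-1}^m` and `c(x) = N⁻ⁿ ∑_j ω_N(jᵀ(y - Ax))`. The sum over `j` factors into one geometric sum
of an `N`-th root of unity per row (`sum_pow_expRatio`), so `c(x)` is `1` if `Ax ≡ y (mod N)` and `0`
otherwise (`character_sum`). Hence the coefficient of `X^{𝟙ᵀy}` counts the `x` in the box with
`Ax ≡ y (mod N)` and `𝟙ᵀAx = 𝟙ᵀy`. Since every `y_l < N`, the congruence forces `y ≤ Ax`
entrywise, and equality of the entry sums then forces `Ax = y` (`eq_of_modEq_of_sum_eq`).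
Conversely every solution of `Ax = y` lies in the box, because no column of `A` vanishes
(`lt_of_mulVec_eq`).
-/

open Real Polynomial

/-- The root of unity `ω_N(a - b)`. -/
noncomputable def expRatio (N a b : ℕ) : ℂ :=
  Complex.exp (2 * π * Complex.I * ((a : ℂ) - b) / N)

lemma expRatio_eq_one_iff {N : ℕ} (hN : N ≠ 0) (a b : ℕ) :
    expRatio N a b = 1 ↔ a ≡ b [MOD N] := by
  have hN' : (N : ℂ) ≠ 0 := Nat.cast_ne_zero.mpr hN
  have h2 := Complex.two_pi_I_ne_zero
  rw [expRatio, Complex.exp_eq_one_iff, Nat.ModEq.comm, Nat.modEq_iff_dvd]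
  constructor
  · rintro ⟨k, hk⟩
    refine ⟨k, ?_⟩
    have h : (2 * π * Complex.I) * ((a : ℂ) - b) = (2 * π * Complex.I) * (N * k) := by
      rw [div_eq_iff hN'] at hk
      rw [hk]; ring
    have := mul_left_cancel₀ h2 h
    exact_mod_cast this
  · rintro ⟨k, hk⟩
    refine ⟨k, ?_⟩
    have h : ((a : ℂ) - b) = N * k := by exact_mod_cast hk
    rw [h]; field_simp

lemma expRatio_pow_self {N : ℕ} (hN : N ≠ 0) (a b : ℕ) : expRatio N a b ^ N = 1 := by
  have hN' : (N : ℂ) ≠ 0 := Nat.cast_ne_zero.mpr hN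
  rw [expRatio, ← Complex.exp_nat_mul, Complex.exp_eq_one_iff]
  refine ⟨(a : ℤ) - b, ?_⟩
  push_cast
  field_simp

lemma sum_pow_expRatio {N : ℕ} (hN : N ≠ 0) (a b : ℕ) :
    ∑ j : Fin N, expRatio N a b ^ (j : ℕ) = if a ≡ b [MOD N] then (N : ℂ) else 0 := by
  rw [Fin.sum_univ_eq_sum_range (fun j => expRatio N a b ^ j)]
  split_ifs with h
  · simp [(expRatio_eq_one_iff hN a b).mpr h]
  · have h1 : expRatio N a b ≠ 1 := fun h' => h ((expRatio_eq_one_iff hN a b).mp h')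
    rw [geom_sum_eq h1, expRatio_pow_self hN, sub_self, zero_div]

/-- Orthogonality of the characters of `(ℤ/N)ⁿ`. -/
lemma character_sum {n N : ℕ} (hN : N ≠ 0) (y z : Fin n → ℕ) :
    (1 / (N : ℂ) ^ n) * ∑ j : Fin n → Fin N, ∏ l, expRatio N (y l) (z l) ^ (j l : ℕ) =
      if ∀ l, y l ≡ z l [MOD N] then 1 else 0 := by
  have hN' : (N : ℂ) ≠ 0 := Nat.cast_ne_zero.mpr hN
  have h := Finset.prod_univ_sum (fun _ : Fin n => (Finset.univ : Finset (Fin N)))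
    (fun l j => expRatio N (y l) (z l) ^ (j : ℕ))
  rw [Fintype.piFinset_univ] at h
  rw [← h]
  simp_rw [sum_pow_expRatio hN]
  split_ifs with hc
  · simp [hc, hN']
  · push Not at hc
    obtain ⟨l, hl⟩ := hc
    rw [Finset.prod_eq_zero (Finset.mem_univ l) (by simp [hl]), mul_zero]

/-- The phase attached to `j` and `x` in the expansion of `P` is `ω_N(jᵀ(y - Ax))`, here split into
one factor for each row of `A`. -/
lemma phase_eq {n m N : ℕ} (A : Matrix (Fin n) (Fin m) ℕ) (y : Fin n → ℕ) (x : Fin m → ℕ)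
    (j : Fin n → Fin N) :
    Complex.exp (2 * π * Complex.I * (∑ l, (j l : ℕ) * y l) / N) *
      ∏ l : Fin m, Complex.exp (2 * π * Complex.I *
        (-(∑ l', ((j l' : ℕ) : ℤ) * (A l' l : ℤ)) * (x l : ℤ)) / N) =
      ∏ l, expRatio N (y l) (A.mulVec x l) ^ (j l : ℕ) := by
  simp_rw [expRatio, ← Complex.exp_nat_mul, ← Complex.exp_sum, ← Complex.exp_add]
  congr 1
  have key : ∑ l : Fin m, (∑ l', ((j l' : ℕ) : ℂ) * (A l' l : ℂ)) * (x l : ℂ)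
      = ∑ l', ((j l' : ℕ) : ℂ) * (A.mulVec x l' : ℕ) := by
    simp only [Matrix.mulVec, dotProduct, Nat.cast_sum, Nat.cast_mul, Finset.sum_mul,
      Finset.mul_sum]
    rw [Finset.sum_comm]
    simp only [mul_assoc]
  have e1 : ∑ l : Fin m, 2 * π * Complex.I *
        (-(∑ l', (((j l' : ℕ) : ℤ) : ℂ) * ((A l' l : ℤ) : ℂ)) * ((x l : ℤ) : ℂ)) / N
      = -(2 * π * Complex.I / N) *
        ∑ l : Fin m, (∑ l', ((j l' : ℕ) : ℂ) * (A l' l : ℂ)) * (x l : ℂ) := by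
    rw [Finset.mul_sum]
    refine Finset.sum_congr rfl fun l _ => ?_
    push_cast
    ring
  have e2 : ∑ l, ((j l : ℕ) : ℂ) * (2 * π * Complex.I * ((y l : ℂ) - (A.mulVec x l : ℕ)) / N)
      = (2 * π * Complex.I / N) * (∑ l, ((j l : ℕ) : ℂ) * y l
        - ∑ l, ((j l : ℕ) : ℂ) * (A.mulVec x l : ℕ)) := by
    rw [← Finset.sum_sub_distrib, Finset.mul_sum]
    refine Finset.sum_congr rfl fun l _ => ?_
    ring
  push_cast at e1 e2 ⊢
  rw [e1, e2, key]
  ring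

/-- As `y_l < N`, the residue of `z_l` modulo `N` is `y_l`, so `y ≤ z` entrywise. -/
lemma eq_of_modEq_of_sum_eq {n N : ℕ} {y z : Fin n → ℕ} (hy : ∀ l, y l < N)
    (hmod : ∀ l, y l ≡ z l [MOD N]) (hsum : ∑ l, z l = ∑ l, y l) : z = y := by
  have hle : ∀ l ∈ Finset.univ, y l ≤ z l := fun l _ => by
    have h := hmod l
    rw [Nat.ModEq, Nat.mod_eq_of_lt (hy l)] at h
    rw [h]
    exact Nat.mod_le _ _
  funext l
  exact ((Finset.sum_eq_sum_iff_of_le hle).mp hsum.symm l (Finset.mem_univ l)).symm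

/-- Any nonzero entry in column `k` of `A` gives a row `l` with `x_k ≤ y_l`. -/
lemma lt_of_mulVec_eq {n m N : ℕ} {A : Matrix (Fin n) (Fin m) ℕ}
    (hA : ∀ k : Fin m, ∃ l : Fin n, A l k ≠ 0) {y : Fin n → ℕ} (hy : ∀ l, y l < N)
    {x : Fin m → ℕ} (hx : A.mulVec x = y) (k : Fin m) : x k < N := by
  obtain ⟨l, hl⟩ := hA k
  refine lt_of_le_of_lt ?_ (hy l)
  calc x k ≤ A l k * x k := Nat.le_mul_of_pos_left _ (Nat.pos_of_ne_zero hl)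
    _ ≤ ∑ i, A l i * x i :=
      Finset.single_le_sum (f := fun i => A l i * x i) (fun _ _ => Nat.zero_le _)
        (Finset.mem_univ k)
    _ = y l := by rw [← hx]; rfl

/-- `f_A(y)` is the coefficient of `X^{𝟙ᵀy}` in the polynomial
`(1/Nⁿ) ∑_j ω_N(jᵀy) ∏_l ∑_{h<N} ω_N(-jᵀA_l·h) X^{(𝟙ᵀA_l)h}`. -/
theorem stmt_8 (n m : ℕ) (hn : 1 ≤ n) (hm : 1 ≤ m)
    (A : Matrix (Fin n) (Fin m) ℕ) (hA : ∀ k : Fin m, ∃ l : Fin n, A l k ≠ 0)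
    (y : Fin n → ℕ) (N : ℕ) (hN : N = (Finset.univ.sup y) + 1)
    (fA : (Fin n → ℕ) → ℕ)
    (hfA : ∀ y' : Fin n → ℕ, fA y' = Nat.card {x : Fin m → ℕ // A.mulVec x = y'})
    (P : Polynomial ℂ)
    (hP : P = Polynomial.C (1 / (N : ℂ) ^ n) *
      ∑ j : Fin n → Fin N,
        Polynomial.C (Complex.exp (2 * π * Complex.I * (∑ l, (j l : ℕ) * y l) / N)) *
          ∏ l : Fin m,
            ∑ h ∈ Finset.range N,
              Polynomial.C (Complex.exp (2 * π * Complex.I *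
                  (-(∑ l', ((j l' : ℕ) : ℤ) * (A l' l : ℤ)) * (h : ℤ)) / N)) *
                X ^ ((∑ l', A l' l) * h)) :
    (fA y : ℂ) = P.coeff (∑ l, y l) := by
  classical
  have hN0 : N ≠ 0 := by omega
  have hy : ∀ l, y l < N := fun l => by
    have := Finset.le_sup (f := y) (Finset.mem_univ l)
    omega
  -- `P = ∑_x c(x) X^{𝟙ᵀAx}` over the box, with `c(x)` evaluated by orthogonality.
  have hP' : P = ∑ x ∈ Fintype.piFinset (fun _ : Fin m => Finset.range N),
      Polynomial.C (if ∀ l, y l ≡ A.mulVec x l [MOD N] then (1 : ℂ) else 0) *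
        X ^ (∑ l, A.mulVec x l) := by
    rw [hP]
    simp_rw [Finset.prod_univ_sum, Finset.mul_sum]
    rw [Finset.sum_comm]
    refine Finset.sum_congr rfl fun x _ => ?_
    have hdeg : ∑ l, (∑ l', A l' l) * x l = ∑ l, A.mulVec x l := by
      simp only [Matrix.mulVec, dotProduct, Finset.sum_mul]
      exact Finset.sum_comm
    rw [← character_sum hN0, Finset.mul_sum, map_sum, Finset.sum_mul]
    refine Finset.sum_congr rfl fun j _ => ?_
    rw [← phase_eq, Finset.prod_mul_distrib, Finset.prod_pow_eq_pow_sum, hdeg, map_mul, map_mul,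
      map_prod]
    ring
  have hset : ((Fintype.piFinset (fun _ : Fin m => Finset.range N)).filter
      (fun x => (∀ l, y l ≡ A.mulVec x l [MOD N]) ∧ ∑ l, y l = ∑ l, A.mulVec x l) : Set (Fin m → ℕ))
      = {x | A.mulVec x = y} := by
    ext x
    simp only [Finset.coe_filter, Fintype.mem_piFinset, Finset.mem_range, Set.mem_ofPred_eq]
    constructor
    · rintro ⟨-, h1, h2⟩
      exact eq_of_modEq_of_sum_eq hy h1 h2.symm
    · intro h
      exact ⟨lt_of_mulVec_eq hA hy h, fun l => by rw [h], by rw [h]⟩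
  have hcard : fA y = ((Fintype.piFinset (fun _ : Fin m => Finset.range N)).filter
      (fun x => (∀ l, y l ≡ A.mulVec x l [MOD N]) ∧ ∑ l, y l = ∑ l, A.mulVec x l)).card := by
    rw [hfA, ← Set.ncard_coe_finset, hset]
    rfl
  rw [hcard, hP', Polynomial.finsetSum_coeff, Finset.card_filter, Nat.cast_sum]
  refine Finset.sum_congr rfl fun x _ => ?_
  rw [Polynomial.coeff_C_mul, Polynomial.coeff_X_pow]
  split_ifs <;> simp_all
end
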